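/- arXiv:1311.2755 — 4 statements merged into one kernel-verified Lean document; each statement's English description precedes it below -/
import Mathlib

section
/- Let y : ℝ → ℝ be twice differentiable on an interval I ⊆ (0,∞) with y'(x) ≠ 0 and 3(y'(x))² ≠ 1 for all x ∈ I. If the quantity x·y'(x)/((y'(x))² + 1)² has zero derivative on I (i.e., the Euler–Lagrange condition d/dx[∂Φ/∂ẏ] = 0 holds for Φ(x,y,ẏ) = 2x/(ẏ² + 1), whose integrand has no explicit y-dependence), then y satisfies Newton's differential equation y''(x) = y'(x)·((y'(x))² + 1) / (x·(3(y'(x))² − 1)) on I. -/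
/-!
For Newton's Lagrangian `Φ = 2x / (ẏ² + 1)` the quantity `x y' / (y'² + 1)²` is `-¼ ∂Φ/∂ẏ`, and its
derivative along `y` is a fraction over `(y'² + 1)³` whose numerator is affine in `y''`. The
Euler–Lagrange equation is therefore the polynomial relation
`y' (y'² + 1) = x (3 y'² - 1) y''`. At a point where `3 y'² = 1` its right side would vanish and its
left side would not, so it can always be solved for `y''`.
-/

section EulerLagrange

variable {𝕜 : Type*} [NontriviallyNormedField 𝕜]

theorem hasDerivAt_div_sq_add_one_sq {v : 𝕜} (hv : v ^ 2 + 1 ≠ 0) :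
    HasDerivAt (fun w => w / (w ^ 2 + 1) ^ 2) ((1 - 3 * v ^ 2) / (v ^ 2 + 1) ^ 3) v := by
  have hden : HasDerivAt (fun w : 𝕜 => (w ^ 2 + 1) ^ 2) (2 * (v ^ 2 + 1) * (2 * v)) v := by
    simpa using ((hasDerivAt_pow 2 v).add_const 1).fun_pow 2
  refine ((hasDerivAt_id' v).fun_div hden (pow_ne_zero 2 hv)).congr_deriv ?_
  field_simp
  ring

variable {p : 𝕜 → 𝕜} {p' x : 𝕜}

theorem hasDerivAt_mul_div_sq_add_one_sq (hp : HasDerivAt p p' x) (hq : p x ^ 2 + 1 ≠ 0) :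
    HasDerivAt (fun t => t * p t / (p t ^ 2 + 1) ^ 2)
      ((p x * (p x ^ 2 + 1) - x * (3 * p x ^ 2 - 1) * p') / (p x ^ 2 + 1) ^ 3) x := by
  have hprod := (hasDerivAt_id' x).fun_mul ((hasDerivAt_div_sq_add_one_sq hq).comp x hp)
  simp only [Function.comp_apply, ← mul_div_assoc] at hprod
  refine hprod.congr_deriv ?_
  field_simp
  ring

theorem mul_sq_add_one_eq_of_hasDerivAt_zero (hp : HasDerivAt p p' x) (hq : p x ^ 2 + 1 ≠ 0)
    (hEL : HasDerivAt (fun t => t * p t / (p t ^ 2 + 1) ^ 2) 0 x) :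
    p x * (p x ^ 2 + 1) = x * (3 * p x ^ 2 - 1) * p' := by
  have hzero := (hasDerivAt_mul_div_sq_add_one_sq hp hq).unique hEL
  exact sub_eq_zero.mp ((div_eq_zero_iff.mp hzero).resolve_right (pow_ne_zero 3 hq))

end EulerLagrange

theorem three_mul_sq_ne_one_of_mul_sq_add_one_eq {K : Type*} [Field K] {v a x : K}
    (hv : v ^ 2 + 1 ≠ 0) (h : v * (v ^ 2 + 1) = x * (3 * v ^ 2 - 1) * a) : 3 * v ^ 2 ≠ 1 := by
  intro h3
  have hv0 : v = 0 := by simpa [h3, hv] using h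
  simp [hv0] at h3

theorem newton_euler_lagrange_implies_ode_general {𝕜 : Type*} [NontriviallyNormedField 𝕜]
    (I : Set 𝕜) (hI : ∀ x ∈ I, x ≠ 0) (y y' y'' : 𝕜 → 𝕜)
    (hy : ∀ x ∈ I, HasDerivAt y (y' x) x)
    (hy' : ∀ x ∈ I, HasDerivAt y' (y'' x) x)
    (hq : ∀ x ∈ I, y' x ^ 2 + 1 ≠ 0)
    (hEL : ∀ x ∈ I, HasDerivAt (fun t => t * y' t / (y' t ^ 2 + 1) ^ 2) 0 x) :
    ∀ x ∈ I, y'' x = y' x * (y' x ^ 2 + 1) / (x * (3 * y' x ^ 2 - 1)) := by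
  intro x hx
  have hrel := mul_sq_add_one_eq_of_hasDerivAt_zero (hy' x hx) (hq x hx) (hEL x hx)
  have h3 := three_mul_sq_ne_one_of_mul_sq_add_one_eq (hq x hx) hrel
  rw [hrel, mul_div_cancel_left₀ _ (mul_ne_zero (hI x hx) (sub_ne_zero.mpr h3))]

/-- If the Euler–Lagrange first integral `x·y'(x)/((y'(x))² + 1)²` has zero
derivative on an interval `I ⊆ (0,∞)` where `y` is twice differentiable, `y' ≠ 0` and
`3(y')² ≠ 1`, then `y` satisfies Newton's differential equation on `I`. -/
theorem newton_euler_lagrange_implies_ode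
    (I : Set ℝ) (hI : I ⊆ Set.Ioi (0 : ℝ)) (hIconv : Convex ℝ I)
    (y y' y'' : ℝ → ℝ)
    (hy : ∀ x ∈ I, HasDerivAt y (y' x) x)
    (hy' : ∀ x ∈ I, HasDerivAt y' (y'' x) x)
    (hy'ne : ∀ x ∈ I, y' x ≠ 0)
    (h3 : ∀ x ∈ I, 3 * (y' x) ^ 2 ≠ 1)
    (hEL : ∀ x ∈ I, HasDerivAt (fun t => t * y' t / ((y' t) ^ 2 + 1) ^ 2) 0 x) :
    ∀ x ∈ I, y'' x = y' x * ((y' x) ^ 2 + 1) / (x * (3 * (y' x) ^ 2 - 1)) :=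
  newton_euler_lagrange_implies_ode_general I (fun _ hx => (hI hx).ne') y y' y'' hy hy'
    (fun _ _ => by positivity) hEL
end

section
/- Let r, h > 0, a* > 0, and let y* : ℝ → ℝ be twice differentiable, satisfying Newton's differential equation (y*)''(x) = (y*)'(x)·(((y*)'(x))² + 1)/(x·(3((y*)'(x))² − 1)) on [a*, r*] with 3((y*)'(x))² ≠ 1, together with the initial conditions y*(a*) = 0 and (y*)'(a*) = 1, where r* > a* satisfies the event condition r* = r·y*(r*)/h. Set λ := y*(r*)/h and assume λ > 0. Then the function y(x) := λ⁻¹·y*(λx) satisfies Newton's differential equation on [a*/λ, r], and with a := a*/λ it satisfies y(a) = 0, y'(a) = 1, and y(r) = h; i.e., y solves Newton's free boundary problem with free boundary a = a*/λ. -/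
/-!
The dilations `x ↦ c x`, `y ↦ c y` preserve slopes and divide second derivatives by `c`, which is
exactly how Newton's equation, together with the boundary data `y = 0`, `y' = 1`, transforms. They
therefore permute the free boundary problems with different data `(r, h)`, multiplying the data and
the free boundary by `c`. The event condition says that `r*` and `y*(r*)` are the same multiple `λ`
of `r` and `h`, so the dilation by `λ` relates the auxiliary solution to the sought one.
-/

open Set

section Dilation

variable {𝕜 E : Type*} [NontriviallyNormedField 𝕜] [NormedAddCommGroup E] [NormedSpace 𝕜 E]
  {c x : 𝕜} {y : 𝕜 → E}

/-- The function whose graph is the graph of `y` scaled by `c⁻¹`, i.e. `y* ↦ y` under the group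
`x* = c x`, `y* = c y`. -/
def dilate (c : 𝕜) (y : 𝕜 → E) : 𝕜 → E := fun t => c⁻¹ • y (c * t)

theorem dilate_div (hc : c ≠ 0) (y : 𝕜 → E) (x : 𝕜) : dilate c y (x / c) = c⁻¹ • y x := by
  rw [dilate, mul_div_cancel₀ x hc]

theorem deriv_dilate (hc : c ≠ 0) (y : 𝕜 → E) :
    deriv (dilate c y) = fun t => deriv y (c * t) := by
  ext t
  unfold dilate
  rw [deriv_fun_const_smul_field, deriv_comp_mul_left, inv_smul_smul₀ hc]

theorem deriv_deriv_dilate (hc : c ≠ 0) (y : 𝕜 → E) (x : 𝕜) :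
    deriv (deriv (dilate c y)) x = c • deriv (deriv y) (c * x) := by
  rw [deriv_dilate hc, deriv_comp_mul_left]

theorem differentiableAt_comp_const_mul (hy : DifferentiableAt 𝕜 y (c * x)) :
    DifferentiableAt 𝕜 (fun t => y (c * t)) x :=
  DifferentiableAt.comp x hy (differentiableAt_id.const_mul c)

/-- `y` is a twice differentiable solution on `s` of the second-order equation
`R (x, y, y', y'')`. The equation is a relation rather than a formula for `y''`, so that it can
exclude the points where such a formula is singular. -/
def IsSolutionOn (R : 𝕜 → E → E → E → Prop) (y : 𝕜 → E) (s : Set 𝕜) : Prop :=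
  ∀ x ∈ s, DifferentiableAt 𝕜 y x ∧ DifferentiableAt 𝕜 (deriv y) x ∧
    R x (y x) (deriv y x) (deriv (deriv y) x)

/-- Invariance of the equation `R (x, y, y', y'')` under the dilations `(x, y) ↦ (c x, c y)`, which
act on the derivatives by `(y', y'') ↦ (y', c⁻¹ y'')`. -/
def IsDilationInvariant (R : 𝕜 → E → E → E → Prop) : Prop :=
  ∀ ⦃c : 𝕜⦄, c ≠ 0 → ∀ ⦃x u p q⦄, R (c * x) (c • u) p q → R x u p (c • q)

theorem IsSolutionOn.dilate_of_mapsTo {R : 𝕜 → E → E → E → Prop} (hR : IsDilationInvariant R)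
    (hc : c ≠ 0) {s t : Set 𝕜} (hst : MapsTo (c * ·) s t) (hy : IsSolutionOn R y t) :
    IsSolutionOn R (dilate c y) s := by
  intro x hx
  obtain ⟨hd, hd', heq⟩ := hy (c * x) (hst hx)
  refine ⟨(differentiableAt_comp_const_mul hd).const_smul c⁻¹, ?_, ?_⟩
  · rw [deriv_dilate hc]
    exact differentiableAt_comp_const_mul hd'
  · rw [deriv_deriv_dilate hc, deriv_dilate hc]
    refine hR hc ?_
    rwa [dilate, smul_inv_smul₀ hc]

end Dilation

section FreeBoundary

variable {E : Type*} [NormedAddCommGroup E] [NormedSpace ℝ E]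

/-- `y` solves the free boundary problem for the equation `R` with free boundary `a`: the value `0`
and the slope `p` are prescribed at `a`, and the value `h` at `r`. -/
structure IsFreeBoundarySolution (R : ℝ → E → E → E → Prop) (p : E) (r : ℝ) (h : E)
    (a : ℝ) (y : ℝ → E) : Prop where
  mem_Ioo : a ∈ Ioo 0 r
  isSolutionOn : IsSolutionOn R y (Icc a r)
  apply_left : y a = 0
  deriv_left : deriv y a = p
  apply_right : y r = h

theorem newton_nonITM_general {R : ℝ → E → E → E → Prop} (hR : IsDilationInvariant R)
    {p h : E} {r astar lam : ℝ} {ystar : ℝ → E} (hlam : 0 < lam)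
    (hy : IsFreeBoundarySolution R p (lam * r) (lam • h) astar ystar) :
    IsFreeBoundarySolution R p r h (astar / lam) (dilate lam ystar) where
  mem_Ioo := ⟨div_pos hy.mem_Ioo.1 hlam, (div_lt_iff₀' hlam).2 hy.mem_Ioo.2⟩
  isSolutionOn := hy.isSolutionOn.dilate_of_mapsTo hR hlam.ne' fun _ hx =>
    mem_Icc.2 ⟨(div_le_iff₀' hlam).1 hx.1, mul_le_mul_of_nonneg_left hx.2 hlam.le⟩
  apply_left := by rw [dilate_div hlam.ne', hy.apply_left, smul_zero]
  deriv_left := by simp only [deriv_dilate hlam.ne', mul_div_cancel₀ astar hlam.ne', hy.deriv_left]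
  apply_right := by rw [dilate, hy.apply_right, inv_smul_smul₀ hlam.ne']

end FreeBoundary

/-- Newton's equation, as a relation between `x`, `y`, `p = y'` and `q = y''`; the singular slopes
`3 p² = 1` are excluded. -/
def NewtonEquation (x _y p q : ℝ) : Prop :=
  3 * p ^ 2 ≠ 1 ∧ q = p * (p ^ 2 + 1) / (x * (3 * p ^ 2 - 1))

theorem isDilationInvariant_newtonEquation : IsDilationInvariant NewtonEquation := by
  rintro c hc x u p q ⟨hp, rfl⟩
  refine ⟨hp, ?_⟩
  rw [smul_eq_mul, ← mul_div_assoc, mul_assoc c x, mul_div_mul_left _ _ hc]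

/-- The non-iterative transformation method. If `y*` solves the auxiliary
initial value problem (Newton's equation on `[a*, r*]`, `y*(a*) = 0`, `(y*)'(a*) = 1`)
where `r*` satisfies the event condition `r* = r·y*(r*)/h`, and `λ = y*(r*)/h > 0`,
then `y(x) = λ⁻¹·y*(λx)` solves Newton's free boundary problem with free boundary
`a = a*/λ`: it satisfies the equation on `[a*/λ, r]` with `y(a) = 0`, `y'(a) = 1`,
`y(r) = h`. -/
theorem newton_nonITM
    (r h astar rstar : ℝ) (hr : 0 < r) (hh : 0 < h)
    (hastar : 0 < astar) (hrstar : astar < rstar)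
    (ystar : ℝ → ℝ)
    (hy : Differentiable ℝ ystar) (hy' : Differentiable ℝ (deriv ystar))
    (h3 : ∀ x ∈ Set.Icc astar rstar, 3 * (deriv ystar x) ^ 2 ≠ 1)
    (hODE : ∀ x ∈ Set.Icc astar rstar,
      deriv (deriv ystar) x =
        deriv ystar x * ((deriv ystar x) ^ 2 + 1) /
          (x * (3 * (deriv ystar x) ^ 2 - 1)))
    (hinit0 : ystar astar = 0) (hinit1 : deriv ystar astar = 1)
    (hevent : rstar = r * ystar rstar / h)
    (lam : ℝ) (hlamdef : lam = ystar rstar / h) (hlam : 0 < lam) :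
    (∀ x ∈ Set.Icc (astar / lam) r,
      deriv (deriv (fun t => lam⁻¹ * ystar (lam * t))) x =
        deriv (fun t => lam⁻¹ * ystar (lam * t)) x *
          ((deriv (fun t => lam⁻¹ * ystar (lam * t)) x) ^ 2 + 1) /
          (x * (3 * (deriv (fun t => lam⁻¹ * ystar (lam * t)) x) ^ 2 - 1))) ∧
    (fun t => lam⁻¹ * ystar (lam * t)) (astar / lam) = 0 ∧
    deriv (fun t => lam⁻¹ * ystar (lam * t)) (astar / lam) = 1 ∧
    (fun t => lam⁻¹ * ystar (lam * t)) r = h := by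
  have hr_event : rstar = lam * r := by rw [hevent, hlamdef, mul_comm r, mul_div_right_comm]
  have hh_event : ystar rstar = lam • h := by rw [hlamdef, smul_eq_mul, div_mul_cancel₀ _ hh.ne']
  have hstar : IsFreeBoundarySolution NewtonEquation 1 (lam * r) (lam • h) astar ystar := by
    rw [← hh_event, ← hr_event]
    exact ⟨⟨hastar, hrstar⟩, fun x hx => ⟨hy x, hy' x, h3 x hx, hODE x hx⟩, hinit0, hinit1, rfl⟩
  have hsol := newton_nonITM_general isDilationInvariant_newtonEquation hlam hstar
  exact ⟨fun x hx => (hsol.isSolutionOn x hx).2.2.2, hsol.apply_left, hsol.deriv_left,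
    hsol.apply_right⟩
end

section
/- The function g : [0, 1] → ℝ defined by g(a) = a² + (1 − a)²(1 − a²)/(1 + (1 − a)²) attains its minimum on [0, 1] at a = (3 − √5)/2, and the minimum value equals (3 − √5)/2 ≈ 0.3820. Hence the optimal flat-tipped conical frustum with r = h = 1 has tip radius (3 − √5)/2 and reduced drag coefficient k* = (3 − √5)/2. -/
/-!
Let `c` be the root of `(1 - c) ^ 2 = h ^ 2 * c` below `1`. The drag coefficient of a frustum of
base radius `1` and height `h`, as a function of its tip radius `a`, exceeds `c` by a nonnegative
multiple of `(a - c) ^ 2`. Hence `c` is both the optimal tip radius and the minimum.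
-/

/-- The reduced drag coefficient of the conical frustum with base radius `1`, height `h` and flat
tip of radius `a`: the tip contributes `a ^ 2`, and the lateral surface, an annulus of area
proportional to `1 - a ^ 2` in projection, is weighted by `1 / (1 + s ^ 2)`, where
`s = h / (1 - a)` is its slope. Clearing the fraction in `s` gives a formula that is meaningful for
every real `a` as soon as `h ≠ 0`. -/
noncomputable def frustumDrag (h a : ℝ) : ℝ :=
  a ^ 2 + (1 - a) ^ 2 * (1 - a ^ 2) / (h ^ 2 + (1 - a) ^ 2)

/-- The tip radius of least drag for the frustum of base radius `1` and height `h`: for `0 < h`,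
the smaller root of `(1 - c) ^ 2 = h ^ 2 * c`. -/
noncomputable def optimalTipRadius (h : ℝ) : ℝ :=
  (2 + h ^ 2 - h * √(h ^ 2 + 4)) / 2

theorem frustumDrag_one :
    frustumDrag 1 = fun a => a ^ 2 + (1 - a) ^ 2 * (1 - a ^ 2) / (1 + (1 - a) ^ 2) := by
  ext a
  rw [frustumDrag, one_pow]

section Drag

variable {h c : ℝ}

theorem frustumDrag_eq_add_sq (hh : h ≠ 0) (hc : (1 - c) ^ 2 = h ^ 2 * c) (a : ℝ) :
    frustumDrag h a = c + (1 - c + h ^ 2) * (a - c) ^ 2 / (h ^ 2 + (1 - a) ^ 2) := by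
  have hden : h ^ 2 + (1 - a) ^ 2 ≠ 0 := by positivity
  rw [frustumDrag]
  field_simp
  linear_combination (c + 1 - 2 * a) * hc

theorem frustumDrag_self (hh : h ≠ 0) (hc : (1 - c) ^ 2 = h ^ 2 * c) : frustumDrag h c = c := by
  simp [frustumDrag_eq_add_sq hh hc]

theorem le_frustumDrag (hh : h ≠ 0) (hc : (1 - c) ^ 2 = h ^ 2 * c) (hc1 : c ≤ 1) (a : ℝ) :
    c ≤ frustumDrag h a := by
  have hcoeff : 0 ≤ 1 - c + h ^ 2 := add_nonneg (sub_nonneg.2 hc1) (sq_nonneg h)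
  rw [frustumDrag_eq_add_sq hh hc]
  exact le_add_of_nonneg_right (div_nonneg (mul_nonneg hcoeff (sq_nonneg _)) (by positivity))

end Drag

section OptimalTipRadius

variable {h : ℝ}

theorem one_sub_optimalTipRadius_sq (h : ℝ) :
    (1 - optimalTipRadius h) ^ 2 = h ^ 2 * optimalTipRadius h := by
  have hsqrt : √(h ^ 2 + 4) ^ 2 = h ^ 2 + 4 := Real.sq_sqrt (by positivity)
  rw [optimalTipRadius]
  linear_combination h ^ 2 / 4 * hsqrt

theorem optimalTipRadius_lt_one (hh : 0 < h) : optimalTipRadius h < 1 := by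
  have hsqrt : h < √(h ^ 2 + 4) := Real.lt_sqrt_of_sq_lt (by linarith)
  have hmul : h * h < h * √(h ^ 2 + 4) := mul_lt_mul_of_pos_left hsqrt hh
  rw [optimalTipRadius]
  linarith

theorem optimalTipRadius_pos (hh : 0 < h) : 0 < optimalTipRadius h := by
  have hsq : 0 < (1 - optimalTipRadius h) ^ 2 :=
    pow_pos (sub_pos.2 (optimalTipRadius_lt_one hh)) 2
  rw [one_sub_optimalTipRadius_sq] at hsq
  exact pos_of_mul_pos_right hsq (sq_nonneg h)

theorem optimalTipRadius_one : optimalTipRadius 1 = (3 - √5) / 2 := by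
  norm_num [optimalTipRadius]

end OptimalTipRadius

theorem frustum_optimal_tip_general {h : ℝ} (hh : 0 < h) :
    optimalTipRadius h ∈ Set.Ioo (0 : ℝ) 1 ∧
    IsMinOn (frustumDrag h) Set.univ (optimalTipRadius h) ∧
    frustumDrag h (optimalTipRadius h) = optimalTipRadius h := by
  have hroot := one_sub_optimalTipRadius_sq h
  have hlt := optimalTipRadius_lt_one hh
  have hval := frustumDrag_self hh.ne' hroot
  refine ⟨⟨optimalTipRadius_pos hh, hlt⟩, isMinOn_univ_iff.2 fun a => ?_, hval⟩
  exact hval.trans_le (le_frustumDrag hh.ne' hroot hlt.le a)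

/-- The function `g(a) = a² + (1 − a)²(1 − a²)/(1 + (1 − a)²)` attains its
minimum on `[0, 1]` at `a = (3 − √5)/2`, and the minimum value equals `(3 − √5)/2`:
the optimal flat-tipped conical frustum with `r = h = 1` has tip radius `(3 − √5)/2`
and reduced drag coefficient `k* = (3 − √5)/2`. -/
theorem frustum_optimal_tip :
    ((3 - Real.sqrt 5) / 2 ∈ Set.Icc (0:ℝ) 1) ∧
    IsMinOn (fun a : ℝ => a ^ 2 + (1 - a) ^ 2 * (1 - a ^ 2) / (1 + (1 - a) ^ 2))
      (Set.Icc (0:ℝ) 1) ((3 - Real.sqrt 5) / 2) ∧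
    (fun a : ℝ => a ^ 2 + (1 - a) ^ 2 * (1 - a ^ 2) / (1 + (1 - a) ^ 2))
        ((3 - Real.sqrt 5) / 2) = (3 - Real.sqrt 5) / 2 := by
  rw [← frustumDrag_one, ← optimalTipRadius_one]
  obtain ⟨hmem, hmin, hval⟩ := frustum_optimal_tip_general one_pos
  exact ⟨Set.Ioo_subset_Icc_self hmem, hmin.on_subset (Set.subset_univ _), hval⟩
end

section
/- For every constant C ∈ ℝ, the function u : (0,∞) → ℝ defined by u(s) = s·(s² − ln s + 3s⁴/4 + C)/(s² + 1)² is differentiable and satisfies the reduced first-order equation u'(s) = (s − u(s))·(3s² − 1)/(s·(s² + 1)) for all s > 0. -/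
/-!
The reduced equation is linear, `u' = s * p - p * u` with `p = (3s² − 1) / (s(s² + 1))`.
Since `p = 4s / (s² + 1) − 1 / s`, the function `μ = (s² + 1)² / s` satisfies `μ' = μ * p`, so that
`(μ * u)' = μ * s * p = 2s − 1 / s + 3s³`; integrating and dividing by `μ` gives `u`.
-/

theorem hasDerivAt_div_of_integratingFactor {𝕜 𝕜' : Type*} [NontriviallyNormedField 𝕜]
    [NontriviallyNormedField 𝕜'] [NormedAlgebra 𝕜 𝕜'] {F μ : 𝕜 → 𝕜'} {p q : 𝕜'} {s : 𝕜}
    (hμ : HasDerivAt μ (μ s * p) s) (hF : HasDerivAt F (μ s * q) s) (hμs : μ s ≠ 0) :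
    HasDerivAt (fun t ↦ F t / μ t) (q - p * (F s / μ s)) s := by
  refine (hF.div hμ hμs).congr_deriv ?_
  field_simp

/-- The integrating factor `(s² + 1)² / s` of the reduced equation, on either half-line `s ≠ 0`. -/
noncomputable def reducedIntegratingFactor (s : ℝ) : ℝ :=
  (s ^ 2 + 1) ^ 2 / s

theorem reducedIntegratingFactor_ne_zero {s : ℝ} (hs : s ≠ 0) :
    reducedIntegratingFactor s ≠ 0 :=
  div_ne_zero (by positivity) hs

theorem hasDerivAt_reducedIntegratingFactor {s : ℝ} (hs : s ≠ 0) :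
    HasDerivAt reducedIntegratingFactor
      (reducedIntegratingFactor s * ((3 * s ^ 2 - 1) / (s * (s ^ 2 + 1)))) s := by
  have hnum : HasDerivAt (fun t : ℝ ↦ (t ^ 2 + 1) ^ 2) (2 * (s ^ 2 + 1) * (2 * s)) s := by
    simpa using ((hasDerivAt_pow 2 s).add_const 1).fun_pow 2
  refine (hnum.div (hasDerivAt_id' s) hs).congr_deriv ?_
  unfold reducedIntegratingFactor
  field_simp
  ring

theorem hasDerivAt_sq_sub_log_abs_add (C : ℝ) {s : ℝ} (hs : s ≠ 0) :
    HasDerivAt (fun t : ℝ ↦ t ^ 2 - Real.log |t| + 3 * t ^ 4 / 4 + C)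
      (2 * s - s⁻¹ + 3 * s ^ 3) s := by
  simp only [Real.log_abs]
  have hquartic : HasDerivAt (fun t : ℝ ↦ 3 * t ^ 4 / 4) (3 * s ^ 3) s :=
    (((hasDerivAt_pow 4 s).const_mul 3).div_const 4).congr_deriv (by push_cast; ring)
  have hsq : HasDerivAt (fun t : ℝ ↦ t ^ 2) (2 * s) s := by
    simpa using hasDerivAt_pow 2 s
  exact ((hsq.sub (Real.hasDerivAt_log hs)).add hquartic).add_const C

theorem reducedIntegratingFactor_mul_source {s : ℝ} (hs : s ≠ 0) :
    reducedIntegratingFactor s * (s * ((3 * s ^ 2 - 1) / (s * (s ^ 2 + 1)))) =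
      2 * s - s⁻¹ + 3 * s ^ 3 := by
  unfold reducedIntegratingFactor
  field_simp
  ring

theorem reduced_equation_closed_form_solution_general (C : ℝ) {s : ℝ} (hs : s ≠ 0) :
    HasDerivAt
      (fun s : ℝ ↦ s * (s ^ 2 - Real.log |s| + 3 * s ^ 4 / 4 + C) / (s ^ 2 + 1) ^ 2)
      ((s - s * (s ^ 2 - Real.log |s| + 3 * s ^ 4 / 4 + C) / (s ^ 2 + 1) ^ 2) *
        (3 * s ^ 2 - 1) / (s * (s ^ 2 + 1))) s := by
  have hquotient (F t : ℝ) : t * F / (t ^ 2 + 1) ^ 2 = F / reducedIntegratingFactor t := by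
    rw [reducedIntegratingFactor, div_div_eq_mul_div, mul_comm]
  simp only [hquotient]
  have hprimitive := (hasDerivAt_sq_sub_log_abs_add C hs).congr_deriv
    (reducedIntegratingFactor_mul_source hs).symm
  exact (hasDerivAt_div_of_integratingFactor (hasDerivAt_reducedIntegratingFactor hs) hprimitive
    (reducedIntegratingFactor_ne_zero hs)).congr_deriv (by ring)

/-- For every constant `C`, the function
`u(s) = s·(s² − ln s + 3s⁴/4 + C)/(s² + 1)²` is differentiable on `(0,∞)` and satisfies
the reduced first-order equation `u'(s) = (s − u(s))·(3s² − 1)/(s·(s² + 1))`. -/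
theorem reduced_equation_closed_form_solution (C : ℝ) :
    ∀ s : ℝ, 0 < s →
      HasDerivAt
        (fun s : ℝ => s * (s ^ 2 - Real.log s + 3 * s ^ 4 / 4 + C) / (s ^ 2 + 1) ^ 2)
        ((s - s * (s ^ 2 - Real.log s + 3 * s ^ 4 / 4 + C) / (s ^ 2 + 1) ^ 2) *
          (3 * s ^ 2 - 1) / (s * (s ^ 2 + 1))) s := by
  intro s hs
  simpa only [Real.log_abs] using reduced_equation_closed_form_solution_general C hs.ne'
end
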